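/- The map Ω : PPU(b)⁻ → Sub(V⊕) is an isomorphism of partially ordered sets, where PPU(b)⁻ carries the right-divisibility order (φ ⊑ ψ :⟺ ψ = χφ for some χ ∈ PPU(b)⁻) and Sub(V⊕) is ordered by inclusion. In particular, PPU(b)⁻ with the right-divisibility order is a modular lattice. -/

import Mathlib

open Finsupp

variable (k : Type*) [Field k] (V : Type*) [AddCommGroup V] [Module k V]

/-- Multiplication by `t^n` on `V[t,t⁻¹] := ℤ →₀ V` (writing `v = ∑ᵢ tⁱ vᵢ` as the
finitely supported function `i ↦ vᵢ`). -/
noncomputable def shift (n : ℤ) : (ℤ →₀ V) ≃ₗ[k] (ℤ →₀ V) :=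
  Finsupp.domLCongr (Equiv.addRight n)

/-- The coefficient of `tⁿ` of `b̃(v,w) = ∑ₙ tⁿ (∑ᵢ b(v_{i-n}, w_i))`. -/
noncomputable def Btilde (b : LinearMap.BilinForm k V) (n : ℤ) (v w : ℤ →₀ V) : k :=
  w.sum fun i wi => b (v (i - n)) wi

/-- `φ` is a paraunitary transformation: an invertible `k[t,t⁻¹]`-linear
(i.e. `k`-linear and commuting with multiplication by `t`) endomorphism of
`V[t,t⁻¹]` preserving `b̃`. -/
def IsPU (b : LinearMap.BilinForm k V) (φ : (ℤ →₀ V) ≃ₗ[k] (ℤ →₀ V)) : Prop :=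
  (∀ v, φ (shift k V 1 v) = shift k V 1 (φ v)) ∧
  ∀ (n : ℤ) (v w : ℤ →₀ V), Btilde k V b n (φ v) (φ w) = Btilde k V b n v w

/-- The specialization `t = 1` of a `k[t,t⁻¹]`-linear endomorphism `f = ∑ᵢ tⁱ fᵢ`
of `V[t,t⁻¹]`, i.e. the endomorphism `ε₁(f) = ∑ᵢ fᵢ` of `V`. -/
noncomputable def eps (f : (ℤ →₀ V) →ₗ[k] (ℤ →₀ V)) : V →ₗ[k] V :=
  (Finsupp.lsum k fun _ : ℤ => (LinearMap.id : V →ₗ[k] V)) ∘ₗ f ∘ₗ Finsupp.lsingle 0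

/-- `φ` is pure paraunitary: paraunitary and specializing to the identity at `t = 1`. -/
def IsPPU (b : LinearMap.BilinForm k V) (φ : (ℤ →₀ V) ≃ₗ[k] (ℤ →₀ V)) : Prop :=
  IsPU k V b φ ∧ eps k V (φ : (ℤ →₀ V) →ₗ[k] (ℤ →₀ V)) = LinearMap.id

/-- `φ ∈ PPU(b)⁻`: pure paraunitary and all Laurent coefficients `φᵢ` for `i > 0` vanish. -/
def PPUneg (b : LinearMap.BilinForm k V) (φ : (ℤ →₀ V) ≃ₗ[k] (ℤ →₀ V)) : Prop :=
  IsPPU k V b φ ∧ ∀ (x : V) (i : ℤ), 0 < i → φ (Finsupp.single 0 x) i = 0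

/-- `V[t⁻¹] ⊆ V[t,t⁻¹]`: the elements with `vᵢ = 0` for `i > 0`. -/
def Vneg : Submodule k (ℤ →₀ V) where
  carrier := {v | ∀ i : ℤ, 0 < i → v i = 0}
  add_mem' := by
    intro a c ha hc i hi
    simp only [Set.mem_setOf_eq] at *
    simp [Finsupp.add_apply, ha i hi, hc i hi]
  zero_mem' := by intro i _; rfl
  smul_mem' := by
    intro c x hx i hi
    simp only [Set.mem_setOf_eq] at *
    simp [Finsupp.smul_apply, hx i hi]

/-- Multiplication by `t⁻¹` descends to the quotient `V⊕ = V[t,t⁻¹]/V[t⁻¹]`,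
making `V⊕` a module over `k[t⁻¹]`. -/
noncomputable def shiftQ : ((ℤ →₀ V) ⧸ Vneg k V) →ₗ[k] ((ℤ →₀ V) ⧸ Vneg k V) :=
  Submodule.mapQ (Vneg k V) (Vneg k V) (shift k V (-1)).toLinearMap (by
    intro v hv i hi
    have h : (shift k V (-1)).toLinearMap v i = v (i + 1) := by
      simp [shift, Finsupp.domLCongr_apply, Finsupp.equivMapDomain_apply]
    rw [h]
    exact hv (i + 1) (by omega))

/-- A finitely generated `k[t⁻¹]`-submodule of `V⊕`: the `k`-span of the
`k[t⁻¹]`-orbit (under multiplication by powers of `t⁻¹`) of a finite set. -/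
def FGSubQ (U : Submodule k ((ℤ →₀ V) ⧸ Vneg k V)) : Prop :=
  ∃ S : Finset ((ℤ →₀ V) ⧸ Vneg k V),
    U = Submodule.span k {x | ∃ s ∈ S, ∃ n : ℕ, x = (shiftQ k V ^ n) s}

/-- The kernel `Ω(φ) ⊆ V⊕` of the endomorphism of `V⊕ = V[t,t⁻¹]/V[t⁻¹]` induced by `φ`. -/
noncomputable def OmegaSub (φ : (ℤ →₀ V) ≃ₗ[k] (ℤ →₀ V)) :
    Submodule k ((ℤ →₀ V) ⧸ Vneg k V) :=
  Submodule.map (Vneg k V).mkQ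
    (Submodule.comap (φ : (ℤ →₀ V) →ₗ[k] (ℤ →₀ V)) (Vneg k V))

variable {k V} in
/-- The right-divisibility order on `PPU(b)⁻`: `φ ⊑ ψ` iff `φ` right-divides `ψ` in
`PPU(b)⁻`. -/
def DvdLe (b : LinearMap.BilinForm k V) (φ ψ : (ℤ →₀ V) ≃ₗ[k] (ℤ →₀ V)) : Prop :=
  ∃ χ, PPUneg k V b χ ∧ ψ = χ * φ

variable {k V} in
/-- `j` is the join of `φ` and `ψ` in `(PPU(b)⁻, ⊑)`. -/
def IsJoinD (b : LinearMap.BilinForm k V) (φ ψ j : (ℤ →₀ V) ≃ₗ[k] (ℤ →₀ V)) : Prop :=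
  PPUneg k V b j ∧ DvdLe b φ j ∧ DvdLe b ψ j ∧
    ∀ χ, PPUneg k V b χ → DvdLe b φ χ → DvdLe b ψ χ → DvdLe b j χ

variable {k V} in
/-- `m` is the meet of `φ` and `ψ` in `(PPU(b)⁻, ⊑)`. -/
def IsMeetD (b : LinearMap.BilinForm k V) (φ ψ m : (ℤ →₀ V) ≃ₗ[k] (ℤ →₀ V)) : Prop :=
  PPUneg k V b m ∧ DvdLe b m φ ∧ DvdLe b m ψ ∧
    ∀ χ, PPUneg k V b χ → DvdLe b χ φ → DvdLe b χ ψ → DvdLe b χ m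

section Aux

variable {k : Type*} [Field k] {V : Type*} [AddCommGroup V] [Module k V]

lemma shift_app (n : ℤ) (v : ℤ →₀ V) (i : ℤ) : shift k V n v i = v (i - n) := by
  simp [shift, Finsupp.domLCongr_apply, Finsupp.equivMapDomain_apply, sub_eq_add_neg]

lemma shift_shift (m n : ℤ) (v : ℤ →₀ V) : shift k V m (shift k V n v) = shift k V (m + n) v := by
  ext i
  simp only [shift_app]
  congr 1
  ring

lemma shift_zero' (v : ℤ →₀ V) : shift k V 0 v = v := by
  ext i
  simp [shift_app]

lemma shift_single (n m : ℤ) (x : V) : shift k V n (single m x) = single (m + n) x := by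
  simp [shift, Finsupp.domLCongr_apply, Finsupp.equivMapDomain_single]

lemma mem_Vneg (v : ℤ →₀ V) : v ∈ Vneg k V ↔ ∀ i : ℤ, 0 < i → v i = 0 := Iff.rfl

/-- commuting with `t` -/
def Comm1 (φ : (ℤ →₀ V) ≃ₗ[k] (ℤ →₀ V)) : Prop :=
  ∀ v, φ (shift k V 1 v) = shift k V 1 (φ v)

lemma comm_all {φ : (ℤ →₀ V) ≃ₗ[k] (ℤ →₀ V)} (h : Comm1 φ) (n : ℤ) :
    ∀ v, φ (shift k V n v) = shift k V n (φ v) := by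
  induction n using Int.induction_on with
  | zero => intro v; simp [shift_zero']
  | succ n ih =>
    intro v
    rw [← shift_shift, ih, h, shift_shift]
  | pred n ih =>
    intro v
    apply (shift k V 1).injective
    rw [← h, shift_shift, shift_shift]
    simpa using ih v

lemma comm_symm {φ : (ℤ →₀ V) ≃ₗ[k] (ℤ →₀ V)} (h : Comm1 φ) : Comm1 φ.symm := by
  intro v
  apply φ.injective
  rw [h]
  simp

lemma bdd_map {φ : (ℤ →₀ V) ≃ₗ[k] (ℤ →₀ V)} (h : Comm1 φ) (N K : ℤ)
    (hN : ∀ (x : V) (i : ℤ), N < i → φ (single 0 x) i = 0) (v : ℤ →₀ V)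
    (hv : ∀ i, K < i → v i = 0) : ∀ i, N + K < i → φ v i = 0 := by
  intro i hi
  conv_lhs => rw [← Finsupp.sum_single v]
  rw [Finsupp.sum, map_sum, Finsupp.finsetSum_apply]
  apply Finset.sum_eq_zero
  intro j hj
  have hjK : j ≤ K := by
    by_contra hc
    exact (Finsupp.mem_support_iff.1 hj) (hv j (by omega))
  have : (single j (v j) : ℤ →₀ V) = shift k V j (single 0 (v j)) := by simp [shift_single]
  rw [this, comm_all h, shift_app]
  exact hN _ _ (by omega)

lemma exists_bdd (v : ℤ →₀ V) : ∃ N : ℕ, ∀ i : ℤ, (N : ℤ) < i → v i = 0 := by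
  refine ⟨v.support.sup Int.toNat, fun i hi => ?_⟩
  by_contra hc
  have := Finset.le_sup (f := Int.toNat) (Finsupp.mem_support_iff.2 hc)
  omega

lemma exists_bdd_map [FiniteDimensional k V] (φ : (ℤ →₀ V) ≃ₗ[k] (ℤ →₀ V)) :
    ∃ N : ℕ, ∀ (x : V) (i : ℤ), (N : ℤ) < i → φ (single 0 x) i = 0 := by
  obtain ⟨S, hS⟩ := (Module.Finite.fg_top : (⊤ : Submodule k V).FG)
  choose f hf using fun x : V => exists_bdd (φ (single 0 x))
  refine ⟨S.sup f, fun x i hi => ?_⟩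
  have hx : x ∈ Submodule.span k (S : Set V) := by rw [hS]; trivial
  induction hx using Submodule.span_induction with
  | mem x hx =>
    have := Finset.le_sup (f := f) hx
    exact hf x i (by omega)
  | zero => simp
  | add x y _ _ h1 h2 => simp [Finsupp.single_add, h1, h2]
  | smul a x _ h1 =>
    rw [← Finsupp.smul_single, map_smul, Finsupp.smul_apply, h1, smul_zero]

/-- evaluation at one -/
noncomputable def Ev : (ℤ →₀ V) →ₗ[k] V := Finsupp.lsum k fun _ : ℤ => (LinearMap.id : V →ₗ[k] V)

lemma Ev_single (n : ℤ) (x : V) : Ev (k := k) (single n x) = x := by simp [Ev]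

lemma eps_apply (f : (ℤ →₀ V) →ₗ[k] (ℤ →₀ V)) (x : V) : eps k V f x = Ev (k := k) (f (single 0 x)) := rfl

lemma Ev_shift (n : ℤ) (v : ℤ →₀ V) : Ev (k := k) (shift k V n v) = Ev (k := k) v := by
  induction v using Finsupp.induction_linear with
  | zero => simp
  | add f g hf hg => simp [hf, hg]
  | single m x => rw [shift_single, Ev_single, Ev_single]

lemma ppu_iff (b : LinearMap.BilinForm k V) (φ : (ℤ →₀ V) ≃ₗ[k] (ℤ →₀ V)) :
    PPUneg k V b φ ↔ Comm1 φ ∧ (∀ (n : ℤ) (v w : ℤ →₀ V), Btilde k V b n (φ v) (φ w) = Btilde k V b n v w)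
      ∧ (∀ v, Ev (k := k) (φ v) = Ev (k := k) v) ∧ ∀ v ∈ Vneg k V, φ v ∈ Vneg k V := by
  constructor
  · rintro ⟨⟨⟨h1, h2⟩, h3⟩, h4⟩
    refine ⟨h1, h2, ?_, ?_⟩
    · intro v
      induction v using Finsupp.induction_linear with
      | zero => simp
      | add f g hf hg => simp [hf, hg]
      | single m x =>
        have : (single m x : ℤ →₀ V) = shift k V m (single 0 x) := by simp [shift_single]
        rw [this, comm_all h1, Ev_shift, Ev_shift, Ev_single]
        exact congrArg (fun f => f x) h3
    · intro v hv
      have := bdd_map h1 0 0 h4 v hv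
      rw [mem_Vneg]
      simpa using this
  · rintro ⟨h1, h2, h3, h4⟩
    refine ⟨⟨⟨h1, h2⟩, ?_⟩, ?_⟩
    · ext x
      rw [eps_apply]
      exact (h3 _).trans (Ev_single _ _)
    · intro x
      refine h4 _ ?_
      intro i hi
      rw [Finsupp.single_apply, if_neg (by omega)]

lemma ppu_mul {b : LinearMap.BilinForm k V} {φ ψ : (ℤ →₀ V) ≃ₗ[k] (ℤ →₀ V)}
    (hφ : PPUneg k V b φ) (hψ : PPUneg k V b ψ) : PPUneg k V b (φ * ψ) := by
  rw [ppu_iff] at *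
  obtain ⟨a1, a2, a3, a4⟩ := hφ
  obtain ⟨c1, c2, c3, c4⟩ := hψ
  refine ⟨?_, ?_, ?_, ?_⟩
  · intro v; simp only [LinearEquiv.mul_apply]; rw [c1, a1]
  · intro n v w; simp only [LinearEquiv.mul_apply]; rw [a2, c2]
  · intro v; simp only [LinearEquiv.mul_apply]; rw [a3, c3]
  · intro v hv; exact a4 _ (c4 _ hv)

lemma ppu_one (b : LinearMap.BilinForm k V) : PPUneg k V b 1 := by
  rw [ppu_iff]
  exact ⟨fun v => rfl, fun n v w => rfl, fun v => rfl, fun v hv => hv⟩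

lemma mem_Omega {b : LinearMap.BilinForm k V} {φ : (ℤ →₀ V) ≃ₗ[k] (ℤ →₀ V)}
    (hφ : PPUneg k V b φ) (v : ℤ →₀ V) :
    (Vneg k V).mkQ v ∈ OmegaSub k V φ ↔ φ v ∈ Vneg k V := by
  constructor
  · rintro ⟨w, hw, e⟩
    have h1 : v - w ∈ Vneg k V := by
      have := (Submodule.Quotient.eq (Vneg k V)).1 e
      simpa using (Vneg k V).neg_mem this
    have h2 := ((ppu_iff b φ).1 hφ).2.2.2 _ h1
    have h3 : φ w ∈ Vneg k V := hw
    have := (Vneg k V).add_mem h2 h3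
    simpa using this
  · intro h
    exact ⟨v, h, rfl⟩

lemma subQ_le_iff (U W : Submodule k ((ℤ →₀ V) ⧸ Vneg k V)) :
    U ≤ W ↔ ∀ v, (Vneg k V).mkQ v ∈ U → (Vneg k V).mkQ v ∈ W := by
  constructor
  · intro h v hv; exact h hv
  · intro h x hx
    obtain ⟨v, rfl⟩ := (Vneg k V).mkQ_surjective x
    exact h v hx

lemma dvd_iff {b : LinearMap.BilinForm k V} {φ ψ : (ℤ →₀ V) ≃ₗ[k] (ℤ →₀ V)}
    (hφ : PPUneg k V b φ) (hψ : PPUneg k V b ψ) :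
    DvdLe b φ ψ ↔ OmegaSub k V φ ≤ OmegaSub k V ψ := by
  rw [subQ_le_iff]
  constructor
  · rintro ⟨χ, hχ, rfl⟩ v hv
    rw [mem_Omega hψ]
    rw [mem_Omega hφ] at hv
    exact ((ppu_iff b χ).1 hχ).2.2.2 _ hv
  · intro h
    refine ⟨ψ * φ⁻¹, ?_, by simp⟩
    obtain ⟨a1, a2, a3, a4⟩ := (ppu_iff b φ).1 hφ
    obtain ⟨c1, c2, c3, c4⟩ := (ppu_iff b ψ).1 hψ
    rw [ppu_iff]
    have key : ∀ v, (ψ * φ⁻¹) v = ψ (φ.symm v) := fun v => rfl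
    refine ⟨?_, ?_, ?_, ?_⟩
    · intro v
      rw [key, key, comm_symm a1, c1]
    · intro n v w
      rw [key, key, c2, ← a2]; simp
    · intro v
      rw [key, c3, ← a3]; simp
    · intro v hv
      rw [key, ← mem_Omega hψ]
      apply h
      rw [mem_Omega hφ]
      simpa using hv

lemma B_single_right (b : LinearMap.BilinForm k V) (n j : ℤ) (v : ℤ →₀ V) (y : V) :
    Btilde k V b n v (single j y) = b (v (j - n)) y := by
  simp [Btilde]

lemma B_single_left (b : LinearMap.BilinForm k V) (n : ℤ) (x : V) (w : ℤ →₀ V) :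
    Btilde k V b n (single 0 x) w = b x (w n) := by
  rw [Btilde, Finsupp.sum, Finset.sum_eq_single n]
  · simp
  · intro i _ hi
    rw [Finsupp.single_apply, if_neg (by omega)]; simp
  · intro h
    rw [Finsupp.notMem_support_iff.1 h]; simp

lemma ppu_unit {b : LinearMap.BilinForm k V}
    (haniso : ∀ v : V, b v v = 0 → v = 0) {χ : (ℤ →₀ V) ≃ₗ[k] (ℤ →₀ V)}
    (h : PPUneg k V b χ) (h' : ∀ v ∈ Vneg k V, χ.symm v ∈ Vneg k V) : χ = 1 := by
  obtain ⟨a1, a2, a3, a4⟩ := (ppu_iff b χ).1 h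
  have s0 : ∀ x : V, (single 0 x : ℤ →₀ V) ∈ Vneg k V := by
    intro x i hi
    rw [Finsupp.single_apply, if_neg (by omega)]
  have hz : ∀ (x : V) (i : ℤ), i ≠ 0 → χ (single 0 x) i = 0 := by
    intro x i hi
    rcases lt_or_gt_of_ne hi with hlt | hgt
    · apply haniso
      generalize hy : χ (single 0 x) i = y
      have e := a2 (-i) (single 0 x) (χ.symm (single 0 y))
      rw [LinearEquiv.apply_symm_apply, B_single_right, B_single_left,
        h' _ (s0 y) (-i) (by omega)] at e
      simpa [hy] using e
    · exact a4 _ (s0 x) i hgt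
  have hs : ∀ x : V, χ (single 0 x) = single 0 x := by
    intro x
    have e1 : χ (single 0 x) = single 0 (χ (single 0 x) 0) := by
      ext i
      by_cases hi : i = 0
      · subst hi; simp
      · rw [hz x i hi, Finsupp.single_apply, if_neg (by omega)]
    have e2 := a3 (single 0 x)
    rw [e1, Ev_single, Ev_single] at e2
    rw [e1, e2]
  apply LinearEquiv.ext
  intro v
  induction v using Finsupp.induction_linear with
  | zero => simp
  | add f g hf hg => simp [hf, hg]
  | single m x =>
    have : (single m x : ℤ →₀ V) = shift k V m (single 0 x) := by simp [shift_single]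
    rw [this, comm_all a1, hs]; rfl

lemma Omega_inj {b : LinearMap.BilinForm k V}
    (haniso : ∀ v : V, b v v = 0 → v = 0) {φ ψ : (ℤ →₀ V) ≃ₗ[k] (ℤ →₀ V)}
    (hφ : PPUneg k V b φ) (hψ : PPUneg k V b ψ) (h : OmegaSub k V φ = OmegaSub k V ψ) : φ = ψ := by
  obtain ⟨χ, hχ, rfl⟩ := (dvd_iff hφ hψ).2 h.le
  have : χ = 1 := by
    apply ppu_unit haniso hχ
    intro v hv
    have h2 : (Vneg k V).mkQ (φ.symm (χ.symm v)) ∈ OmegaSub k V (χ * φ) := by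
      rw [mem_Omega hψ]
      simpa [LinearEquiv.mul_apply] using hv
    rw [← h, mem_Omega hφ] at h2
    simpa using h2
  rw [this, one_mul]

/-- bounded invariant submodules -/
def QGood (U : Submodule k ((ℤ →₀ V) ⧸ Vneg k V)) : Prop :=
  (∀ v, (Vneg k V).mkQ v ∈ U → (Vneg k V).mkQ (shift k V (-1) v) ∈ U) ∧
  ∃ N : ℕ, ∀ v, (Vneg k V).mkQ v ∈ U → ∀ i : ℤ, (N : ℤ) < i → v i = 0

lemma good_Omega [FiniteDimensional k V] {b : LinearMap.BilinForm k V}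
    {φ : (ℤ →₀ V) ≃ₗ[k] (ℤ →₀ V)} (hφ : PPUneg k V b φ) : QGood (OmegaSub k V φ) := by
  obtain ⟨a1, a2, a3, a4⟩ := (ppu_iff b φ).1 hφ
  refine ⟨?_, ?_⟩
  · intro v hv
    rw [mem_Omega hφ] at *
    rw [comm_all a1]
    intro i hi
    rw [shift_app]
    exact hv _ (by omega)
  · obtain ⟨N, hN⟩ := exists_bdd_map φ.symm
    refine ⟨N, fun v hv => ?_⟩
    rw [mem_Omega hφ] at hv
    have := bdd_map (comm_symm a1) N 0 hN _ hv
    simpa using this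

lemma shiftQ_mk (v : ℤ →₀ V) :
    shiftQ k V ((Vneg k V).mkQ v) = (Vneg k V).mkQ (shift k V (-1) v) := rfl

lemma shiftQ_pow_mk (n : ℕ) (v : ℤ →₀ V) :
    (shiftQ k V ^ n) ((Vneg k V).mkQ v) = (Vneg k V).mkQ (shift k V (-(n : ℤ)) v) := by
  induction n with
  | zero => simp [shift_zero']
  | succ n ih =>
    rw [pow_succ', Module.End.mul_apply, ih, shiftQ_mk, shift_shift]
    congr 3
    push_cast; ring

/-- elements of degree at most N -/
lemma good_iff_bdd (N : ℕ) (U : Submodule k ((ℤ →₀ V) ⧸ Vneg k V))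
    (h : ∀ u ∈ U, ∃ v, (Vneg k V).mkQ v = u ∧ ∀ i : ℤ, (N : ℤ) < i → v i = 0) :
    ∀ v, (Vneg k V).mkQ v ∈ U → ∀ i : ℤ, (N : ℤ) < i → v i = 0 := by
  intro v hv i hi
  obtain ⟨w, hw, hb⟩ := h _ hv
  have := (Submodule.Quotient.eq (Vneg k V)).1 hw
  have h2 := this i (by omega)
  rw [Finsupp.sub_apply, hb i hi] at h2
  simpa using h2

lemma good_sup {U W : Submodule k ((ℤ →₀ V) ⧸ Vneg k V)} (hU : QGood U) (hW : QGood W) :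
    QGood (U ⊔ W) := by
  obtain ⟨a1, N, a2⟩ := hU
  obtain ⟨c1, K, c2⟩ := hW
  refine ⟨?_, max N K, ?_⟩
  · intro v hv
    obtain ⟨x, hx, y, hy, e⟩ := Submodule.mem_sup.1 hv
    obtain ⟨x, rfl⟩ := (Vneg k V).mkQ_surjective x
    obtain ⟨y, rfl⟩ := (Vneg k V).mkQ_surjective y
    rw [← shiftQ_mk, ← e, map_add]
    exact Submodule.add_mem_sup (a1 _ hx) (c1 _ hy)
  · apply good_iff_bdd
    intro u hu
    obtain ⟨x, hx, y, hy, e⟩ := Submodule.mem_sup.1 hu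
    obtain ⟨x, rfl⟩ := (Vneg k V).mkQ_surjective x
    obtain ⟨y, rfl⟩ := (Vneg k V).mkQ_surjective y
    refine ⟨x + y, by rw [map_add, e], fun i hi => ?_⟩
    rw [Finsupp.add_apply, a2 _ hx i (by omega), c2 _ hy i (by omega), add_zero]

lemma good_inf {U W : Submodule k ((ℤ →₀ V) ⧸ Vneg k V)} (hU : QGood U) (hW : QGood W) :
    QGood (U ⊓ W) := by
  obtain ⟨a1, N, a2⟩ := hU
  obtain ⟨c1, K, c2⟩ := hW
  exact ⟨fun v hv => ⟨a1 _ hv.1, c1 _ hv.2⟩, N, fun v hv => a2 v hv.1⟩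

lemma good_of_fg {U : Submodule k ((ℤ →₀ V) ⧸ Vneg k V)} (h : FGSubQ k V U) : QGood U := by
  obtain ⟨S, rfl⟩ := h
  choose g hg using (Vneg k V).mkQ_surjective
  choose f hf using fun v : ℤ →₀ V => exists_bdd v
  refine ⟨?_, S.sup (fun s => f (g s)), ?_⟩
  · intro v hv
    rw [← shiftQ_mk]
    generalize (Vneg k V).mkQ v = u at hv
    induction hv using Submodule.span_induction with
    | mem x hx =>
      obtain ⟨s, hs, n, rfl⟩ := hx
      apply Submodule.subset_span
      refine ⟨s, hs, n + 1, ?_⟩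
      rw [pow_succ', Module.End.mul_apply]
    | zero => simp
    | add x y _ _ h1 h2 => rw [map_add]; exact Submodule.add_mem _ h1 h2
    | smul a x _ h1 => rw [map_smul]; exact Submodule.smul_mem _ _ h1
  · apply good_iff_bdd
    intro u hu
    induction hu using Submodule.span_induction with
    | mem x hx =>
      obtain ⟨s, hs, n, rfl⟩ := hx
      refine ⟨shift k V (-(n : ℤ)) (g s), ?_, ?_⟩
      · rw [← shiftQ_pow_mk, hg]
      · intro i hi
        have := Finset.le_sup (f := fun s => f (g s)) hs
        rw [shift_app]
        apply hf
        omega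
    | zero => exact ⟨0, by simp, by simp⟩
    | add x y _ _ h1 h2 =>
      obtain ⟨v, rfl, hv⟩ := h1
      obtain ⟨w, rfl, hw⟩ := h2
      exact ⟨v + w, by simp, fun i hi => by simp [hv i hi, hw i hi]⟩
    | smul a x _ h1 =>
      obtain ⟨v, rfl, hv⟩ := h1
      exact ⟨a • v, by simp, fun i hi => by simp [hv i hi]⟩

lemma fg_of_good [FiniteDimensional k V] {U : Submodule k ((ℤ →₀ V) ⧸ Vneg k V)} (h : QGood U) :
    FGSubQ k V U := by
  obtain ⟨h1, N, h2⟩ := h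
  have hfd : Module.Finite k (Finsupp.supported V k (Set.Icc (1 : ℤ) N)) :=
    Module.Finite.equiv (Finsupp.supportedEquivFinsupp (R := k) (M := V) (Set.Icc (1 : ℤ) N)).symm
  have hle : U ≤ Submodule.map (Vneg k V).mkQ (Finsupp.supported V k (Set.Icc (1 : ℤ) N)) := by
    rw [subQ_le_iff]
    intro v hv
    refine ⟨v.filter (fun i => i ∈ Set.Icc (1 : ℤ) N), ?_, ?_⟩
    · change _ ∈ Finsupp.supported V k _
      rw [Finsupp.mem_supported]
      intro i hi
      simp at hi
      exact Set.mem_Icc.2 (by tauto)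
    · apply (Submodule.Quotient.eq (Vneg k V)).2
      intro i hi
      rw [Finsupp.sub_apply, Finsupp.filter_apply]
      split_ifs with hc
      · simp
      · rw [h2 v hv i (by simp at hc; omega)]; simp
  have hU : Module.Finite k U := Submodule.finiteDimensional_of_le hle
  obtain ⟨S, hS⟩ := (Module.Finite.iff_fg.1 hU)
  refine ⟨S, le_antisymm ?_ ?_⟩
  · rw [← hS]
    apply Submodule.span_mono
    intro s hs
    exact ⟨s, hs, 0, by simp⟩
  · rw [Submodule.span_le]
    rintro x ⟨s, hs, n, rfl⟩
    have hs' : s ∈ U := by rw [← hS]; exact Submodule.subset_span hs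
    induction n with
    | zero => simpa using hs'
    | succ n ih =>
      rw [pow_succ', Module.End.mul_apply]
      obtain ⟨v, hv⟩ := (Vneg k V).mkQ_surjective ((shiftQ k V ^ n) s)
      rw [← hv] at ih ⊢
      exact h1 v ih

end Aux

section Aux2

variable {k : Type*} [Field k] {V : Type*} [AddCommGroup V] [Module k V]

lemma exists_proj [FiniteDimensional k V] (b : LinearMap.BilinForm k V)
    (hsymm : ∀ v w : V, b v w = b w v)
    (haniso : ∀ v : V, b v v = 0 → v = 0) (W : Submodule k V) :
    ∃ p : V →ₗ[k] V, (∀ x, p x ∈ W) ∧ (∀ x ∈ W, p x = x) ∧ ∀ x y, b (p x) y = b x (p y) := by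
  have hr : b.IsRefl := fun x y h => by rw [hsymm]; exact h
  have hn : (b.restrict W).Nondegenerate := by
    constructor
    · intro x hx
      have := haniso x (hx x)
      exact Subtype.ext this
    · intro x hx
      have := haniso x (hx x)
      exact Subtype.ext this
  have hc := LinearMap.BilinForm.isCompl_orthogonal_of_restrict_nondegenerate hr hn
  have hperp : ∀ x y, b (W.projection _ hc x) (y - W.projection _ hc y) = 0 := by
    intro x y
    exact (Submodule.sub_projection_mem hc y) _ (Submodule.projection_apply_mem hc x)
  refine ⟨W.projection _ hc, fun x => Submodule.projection_apply_mem hc x,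
    fun x hx => Submodule.projection_apply_left hc ⟨x, hx⟩, fun x y => ?_⟩
  have h1 := hperp x y
  have h2 := hperp y x
  rw [map_sub, sub_eq_zero] at h1 h2
  rw [h1, hsymm x, h2, hsymm]

/-- coefficientwise map -/
noncomputable def mr (p : V →ₗ[k] V) : (ℤ →₀ V) →ₗ[k] (ℤ →₀ V) := Finsupp.mapRange.linearMap p

lemma mr_app (p : V →ₗ[k] V) (v : ℤ →₀ V) (i : ℤ) : mr p v i = p (v i) := by simp [mr]

/-- `1 - p + t^c p` -/
noncomputable def elmMap (p : V →ₗ[k] V) (c : ℤ) : (ℤ →₀ V) →ₗ[k] (ℤ →₀ V) :=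
  LinearMap.id - mr p + (shift k V c).toLinearMap ∘ₗ mr p

lemma elmMap_app (p : V →ₗ[k] V) (c : ℤ) (v : ℤ →₀ V) (i : ℤ) :
    elmMap p c v i = v i - p (v i) + p (v (i - c)) := by
  simp [elmMap, shift_app, mr_app]

/-- the elementary paraunitary map -/
noncomputable def elm (p : V →ₗ[k] V) (hp : ∀ x, p (p x) = p x) : (ℤ →₀ V) ≃ₗ[k] (ℤ →₀ V) :=
  LinearEquiv.ofLinearMap (elmMap p (-1)) (elmMap p 1)
    (by
      apply LinearMap.ext; intro v
      apply Finsupp.ext; intro i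
      simp [elmMap_app, hp])
    (by
      apply LinearMap.ext; intro v
      apply Finsupp.ext; intro i
      simp [elmMap_app, hp])

lemma elm_app (p : V →ₗ[k] V) (hp : ∀ x, p (p x) = p x) (v : ℤ →₀ V) (i : ℤ) :
    elm p hp v i = v i - p (v i) + p (v (i + 1)) := by
  change elmMap p (-1) v i = _
  rw [elmMap_app, sub_neg_eq_add]

lemma elm_eq (p : V →ₗ[k] V) (hp : ∀ x, p (p x) = p x) (v : ℤ →₀ V) :
    elm p hp v = (v - mr p v) + shift k V (-1) (mr p v) := rfl

lemma elm_symm_app (p : V →ₗ[k] V) (hp : ∀ x, p (p x) = p x) (v : ℤ →₀ V) (i : ℤ) :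
    (elm p hp).symm v i = v i - p (v i) + p (v (i - 1)) := by
  change elmMap p 1 v i = _
  rw [elmMap_app]

lemma B_add_left (b : LinearMap.BilinForm k V) (n : ℤ) (v v' w : ℤ →₀ V) :
    Btilde k V b n (v + v') w = Btilde k V b n v w + Btilde k V b n v' w := by
  simp [Btilde, Finsupp.sum_add]

lemma B_add_right (b : LinearMap.BilinForm k V) (n : ℤ) (v w w' : ℤ →₀ V) :
    Btilde k V b n v (w + w') = Btilde k V b n v w + Btilde k V b n v w' := by
  unfold Btilde
  exact Finsupp.sum_add_index' (by simp) (by simp)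

lemma B_zero_right (b : LinearMap.BilinForm k V) (n : ℤ) (v : ℤ →₀ V) :
    Btilde k V b n v 0 = 0 := by
  simp [Btilde]

lemma B_shift (b : LinearMap.BilinForm k V) (n a : ℤ) (v w : ℤ →₀ V) :
    Btilde k V b n (shift k V a v) (shift k V a w) = Btilde k V b n v w := by
  induction w using Finsupp.induction_linear with
  | zero => simp [B_zero_right]
  | add f g hf hg => rw [map_add, B_add_right, B_add_right, hf, hg]
  | single m x =>
    rw [shift_single, B_single_right, B_single_right, shift_app]
    congr 3
    ring

lemma B_mr (b : LinearMap.BilinForm k V) (p : V →ₗ[k] V) (hs : ∀ x y, b (p x) y = b x (p y))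
    (n : ℤ) (v w : ℤ →₀ V) :
    Btilde k V b n (mr p v) w = Btilde k V b n v (mr p w) := by
  induction w using Finsupp.induction_linear with
  | zero => simp [B_zero_right]
  | add f g hf hg => rw [map_add, B_add_right, B_add_right, hf, hg]
  | single m x =>
    have : mr p (single m x) = single m (p x) := by simp [mr]
    rw [this, B_single_right, B_single_right, mr_app, hs]

lemma elm_ppu (b : LinearMap.BilinForm k V) (p : V →ₗ[k] V) (hp : ∀ x, p (p x) = p x)
    (hs : ∀ x y, b (p x) y = b x (p y)) : PPUneg k V b (elm p hp) := by
  rw [ppu_iff]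
  refine ⟨?_, ?_, ?_, ?_⟩
  · intro v
    ext i
    rw [elm_app, shift_app, shift_app, shift_app, elm_app]
    congr 4
    ring
  · intro n v w
    have z1 : Btilde k V b n (v - mr p v) (shift k V (-1) (mr p w)) = 0 := by
      have e : shift k V (-1) (mr p w) = mr p (shift k V (-1) w) := by
        ext i; simp [shift_app, mr_app]
      rw [e, ← B_mr b p hs]
      have e2 : mr p (v - mr p v) = 0 := by ext i; simp [mr_app, hp]
      rw [e2]; simp [Btilde]
    have z2 : Btilde k V b n (shift k V (-1) (mr p v)) (w - mr p w) = 0 := by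
      have e : shift k V (-1) (mr p v) = mr p (shift k V (-1) v) := by
        ext i; simp [shift_app, mr_app]
      rw [e, B_mr b p hs]
      have e2 : mr p (w - mr p w) = 0 := by ext i; simp [mr_app, hp]
      rw [e2, B_zero_right]
    have z3 : Btilde k V b n (mr p v) (w - mr p w) = 0 := by
      rw [B_mr b p hs]
      have e2 : mr p (w - mr p w) = 0 := by ext i; simp [mr_app, hp]
      rw [e2, B_zero_right]
    have z4 : Btilde k V b n (v - mr p v) (mr p w) = 0 := by
      rw [← B_mr b p hs]
      have e2 : mr p (v - mr p v) = 0 := by ext i; simp [mr_app, hp]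
      rw [e2]; simp [Btilde]
    have e : Btilde k V b n v w = Btilde k V b n ((v - mr p v) + mr p v) ((w - mr p w) + mr p w) := by
      simp
    rw [e, elm_eq, elm_eq]
    simp only [B_add_left, B_add_right, z1, z2, z3, z4, B_shift]
  · intro v
    rw [elm_eq, map_add, Ev_shift, map_sub]; simp
  · intro v hv i hi
    rw [elm_app, hv i hi, hv (i + 1) (by omega)]; simp

lemma mkQ_congr_mem (U : Submodule k ((ℤ →₀ V) ⧸ Vneg k V)) {v w : ℤ →₀ V}
    (h : v - w ∈ Vneg k V) (hv : (Vneg k V).mkQ v ∈ U) : (Vneg k V).mkQ w ∈ U := by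
  have : (Vneg k V).mkQ v = (Vneg k V).mkQ w := (Submodule.Quotient.eq (Vneg k V)).2 h
  rwa [← this]

lemma inv_iter {U : Submodule k ((ℤ →₀ V) ⧸ Vneg k V)}
    (hU : ∀ v, (Vneg k V).mkQ v ∈ U → (Vneg k V).mkQ (shift k V (-1) v) ∈ U) (n : ℕ) (v : ℤ →₀ V)
    (hv : (Vneg k V).mkQ v ∈ U) : (Vneg k V).mkQ (shift k V (-(n : ℤ)) v) ∈ U := by
  induction n with
  | zero => simpa [shift_zero'] using hv
  | succ n ih =>
    have := hU _ ih
    rw [shift_shift] at this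
    have e : (-((n + 1 : ℕ) : ℤ)) = -1 + -(n : ℤ) := by push_cast; ring
    rwa [e]

lemma Omega_surj [FiniteDimensional k V] (b : LinearMap.BilinForm k V)
    (hsymm : ∀ v w : V, b v w = b w v)
    (haniso : ∀ v : V, b v v = 0 → v = 0) (N : ℕ) :
    ∀ U : Submodule k ((ℤ →₀ V) ⧸ Vneg k V),
      (∀ v, (Vneg k V).mkQ v ∈ U → (Vneg k V).mkQ (shift k V (-1) v) ∈ U) →
      (∀ v, (Vneg k V).mkQ v ∈ U → ∀ i : ℤ, (N : ℤ) < i → v i = 0) →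
      ∃ φ, PPUneg k V b φ ∧ OmegaSub k V φ = U := by
  induction N with
  | zero =>
    intro U _ h2
    refine ⟨1, ppu_one b, ?_⟩
    apply le_antisymm
    · rw [subQ_le_iff]
      intro v hv
      rw [mem_Omega (ppu_one b)] at hv
      have : (Vneg k V).mkQ v = 0 := (Submodule.Quotient.mk_eq_zero _).2 hv
      rw [this]; exact U.zero_mem
    · rw [subQ_le_iff]
      intro v hv
      rw [mem_Omega (ppu_one b)]
      exact fun i hi => h2 v hv i (by simpa using hi)
  | succ N ih =>
    intro U h1 h2
    let W : Submodule k V := U.comap ((Vneg k V).mkQ ∘ₗ Finsupp.lsingle 1)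
    have hW : ∀ x, x ∈ W ↔ (Vneg k V).mkQ (single 1 x) ∈ U := fun x => Iff.rfl
    obtain ⟨p, p1, p2, p3⟩ := exists_proj b hsymm haniso W
    have hp : ∀ x, p (p x) = p x := fun x => p2 _ (p1 x)
    have hf := elm_ppu b p hp p3
    set f := elm p hp with hfdef
    have hfc := ((ppu_iff b f).1 hf).1
    let U' : Submodule k ((ℤ →₀ V) ⧸ Vneg k V) :=
      Submodule.map (Vneg k V).mkQ
        (Submodule.comap f.symm.toLinearMap (Submodule.comap (Vneg k V).mkQ U))
    have hM : ∀ v ∈ Vneg k V, (Vneg k V).mkQ (f.symm v) ∈ U := by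
      intro v hv
      refine mkQ_congr_mem U (v := single 1 (p (v 0))) ?_ ((hW _).1 (p1 _))
      intro i hi
      rw [Finsupp.sub_apply, hfdef, elm_symm_app, hv i hi]
      by_cases h : i = 1
      · subst h; simp
      · rw [Finsupp.single_apply, if_neg (by omega), hv (i - 1) (by omega)]; simp
    have hU' : ∀ v, (Vneg k V).mkQ v ∈ U' ↔ (Vneg k V).mkQ (f.symm v) ∈ U := by
      intro v
      constructor
      · rintro ⟨w, hw, e⟩
        have h3 := hM _ ((Submodule.Quotient.eq (Vneg k V)).1 e)
        have h4 : (Vneg k V).mkQ (f.symm w) ∈ U := hw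
        rw [map_sub, map_sub] at h3
        have := U.sub_mem h4 h3
        simpa using this
      · intro h
        exact ⟨v, h, rfl⟩
    obtain ⟨φ, hφ, hO⟩ := ih U' (by
      intro v hv
      rw [hU'] at *
      rw [comm_all (comm_symm hfc)]
      exact h1 _ hv) (by
      intro v hv i hi
      rw [hU'] at hv
      obtain ⟨u, rfl⟩ := f.surjective v
      rw [LinearEquiv.symm_apply_apply] at hv
      rw [hfdef, elm_app, h2 u hv (i + 1) (by push_cast; omega)]
      have : p (u i) = u i := by
        apply p2
        by_cases h : i = N + 1
        · subst h
          rw [hW]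
          refine mkQ_congr_mem U ?_ (inv_iter h1 N u hv)
          intro j hj
          rw [Finsupp.sub_apply, shift_app]
          by_cases h : j = 1
          · subst h; simp [add_comm]
          · rw [Finsupp.single_apply, if_neg (by omega), h2 u hv _ (by push_cast; omega)]; simp
        · rw [h2 u hv i (by push_cast; omega)]; exact W.zero_mem
      rw [this]; simp)
    refine ⟨φ * f, ppu_mul hφ hf, ?_⟩
    have key : ∀ v, (Vneg k V).mkQ v ∈ OmegaSub k V (φ * f) ↔ (Vneg k V).mkQ v ∈ U := by
      intro v
      rw [mem_Omega (ppu_mul hφ hf), LinearEquiv.mul_apply, ← mem_Omega hφ, hO, hU',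
        LinearEquiv.symm_apply_apply]
    exact le_antisymm ((subQ_le_iff _ _).2 fun v => (key v).1) ((subQ_le_iff _ _).2 fun v => (key v).2)

lemma surj_good [FiniteDimensional k V] (b : LinearMap.BilinForm k V)
    (hsymm : ∀ v w : V, b v w = b w v)
    (haniso : ∀ v : V, b v v = 0 → v = 0) {U : Submodule k ((ℤ →₀ V) ⧸ Vneg k V)}
    (hU : QGood U) : ∃ φ, PPUneg k V b φ ∧ OmegaSub k V φ = U := by
  obtain ⟨h1, N, h2⟩ := hU
  exact Omega_surj b hsymm haniso N U h1 h2

lemma join_Omega [FiniteDimensional k V] (b : LinearMap.BilinForm k V)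
    (hsymm : ∀ v w : V, b v w = b w v)
    (haniso : ∀ v : V, b v v = 0 → v = 0) {x y j : (ℤ →₀ V) ≃ₗ[k] (ℤ →₀ V)}
    (hx : PPUneg k V b x) (hy : PPUneg k V b y) (h : IsJoinD b x y j) :
    OmegaSub k V j = OmegaSub k V x ⊔ OmegaSub k V y := by
  obtain ⟨hj, h1, h2, h3⟩ := h
  obtain ⟨φ, hφ, e⟩ := surj_good b hsymm haniso (good_sup (good_Omega hx) (good_Omega hy))
  apply le_antisymm
  · rw [← e, ← dvd_iff hj hφ]
    apply h3 φ hφ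
    · rw [dvd_iff hx hφ, e]; exact le_sup_left
    · rw [dvd_iff hy hφ, e]; exact le_sup_right
  · exact sup_le ((dvd_iff hx hj).1 h1) ((dvd_iff hy hj).1 h2)

lemma meet_Omega [FiniteDimensional k V] (b : LinearMap.BilinForm k V)
    (hsymm : ∀ v w : V, b v w = b w v)
    (haniso : ∀ v : V, b v v = 0 → v = 0) {x y j : (ℤ →₀ V) ≃ₗ[k] (ℤ →₀ V)}
    (hx : PPUneg k V b x) (hy : PPUneg k V b y) (h : IsMeetD b x y j) :
    OmegaSub k V j = OmegaSub k V x ⊓ OmegaSub k V y := by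
  obtain ⟨hj, h1, h2, h3⟩ := h
  obtain ⟨φ, hφ, e⟩ := surj_good b hsymm haniso (good_inf (good_Omega hx) (good_Omega hy))
  apply le_antisymm
  · exact le_inf ((dvd_iff hj hx).1 h1) ((dvd_iff hj hy).1 h2)
  · rw [← e, ← dvd_iff hφ hj]
    apply h3 φ hφ
    · rw [dvd_iff hφ hx, e]; exact inf_le_left
    · rw [dvd_iff hφ hy, e]; exact inf_le_right

end Aux2


/-- `Ω` is an isomorphism of posets from `(PPU(b)⁻, ⊑)` (the
right-divisibility order) onto `Sub(V⊕)` (finitely generated `k[t⁻¹]`-submodules,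
ordered by inclusion); in particular `(PPU(b)⁻, ⊑)` is a modular lattice. -/
theorem stmt15 [FiniteDimensional k V] (b : LinearMap.BilinForm k V)
    (hsymm : ∀ v w : V, b v w = b w v)
    (haniso : ∀ v : V, b v v = 0 → v = 0) :
    (∀ φ, PPUneg k V b φ → FGSubQ k V (OmegaSub k V φ)) ∧
    (∀ φ ψ, PPUneg k V b φ → PPUneg k V b ψ →
      (DvdLe b φ ψ ↔ OmegaSub k V φ ≤ OmegaSub k V ψ)) ∧
    (∀ U : Submodule k ((ℤ →₀ V) ⧸ Vneg k V), FGSubQ k V U →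
      ∃ φ, PPUneg k V b φ ∧ OmegaSub k V φ = U) ∧
    (∀ φ ψ, PPUneg k V b φ → PPUneg k V b ψ → OmegaSub k V φ = OmegaSub k V ψ → φ = ψ) ∧
    (∀ φ ψ, PPUneg k V b φ → PPUneg k V b ψ →
      (∃ j, IsJoinD b φ ψ j) ∧ (∃ m, IsMeetD b φ ψ m)) ∧
    (∀ x y z m j J M, PPUneg k V b x → PPUneg k V b y → PPUneg k V b z →
      DvdLe b x z → IsMeetD b y z m → IsJoinD b x m j → IsJoinD b x y J →
      IsMeetD b J z M → j = M) := by
  refine ⟨fun φ hφ => fg_of_good (good_Omega hφ), fun φ ψ hφ hψ => dvd_iff hφ hψ,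
    fun U hU => surj_good b hsymm haniso (good_of_fg hU),
    fun φ ψ hφ hψ h => Omega_inj haniso hφ hψ h, fun φ ψ hφ hψ => ⟨?_, ?_⟩, ?_⟩
  · obtain ⟨j, hj, e⟩ := surj_good b hsymm haniso (good_sup (good_Omega hφ) (good_Omega hψ))
    refine ⟨j, hj, ?_, ?_, ?_⟩
    · rw [dvd_iff hφ hj, e]; exact le_sup_left
    · rw [dvd_iff hψ hj, e]; exact le_sup_right
    · intro χ hχ h1 h2
      rw [dvd_iff hj hχ, e]
      exact sup_le ((dvd_iff hφ hχ).1 h1) ((dvd_iff hψ hχ).1 h2)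
  · obtain ⟨j, hj, e⟩ := surj_good b hsymm haniso (good_inf (good_Omega hφ) (good_Omega hψ))
    refine ⟨j, hj, ?_, ?_, ?_⟩
    · rw [dvd_iff hj hφ, e]; exact inf_le_left
    · rw [dvd_iff hj hψ, e]; exact inf_le_right
    · intro χ hχ h1 h2
      rw [dvd_iff hχ hj, e]
      exact le_inf ((dvd_iff hχ hφ).1 h1) ((dvd_iff hχ hψ).1 h2)
  · intro x y z m j J M hx hy hz hxz hm hj hJ hM
    apply Omega_inj haniso hj.1 hM.1
    rw [join_Omega b hsymm haniso hx hm.1 hj, meet_Omega b hsymm haniso hy hz hm,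
      meet_Omega b hsymm haniso hJ.1 hz hM, join_Omega b hsymm haniso hx hy hJ]
    exact (sup_inf_assoc_of_le _ ((dvd_iff hx hz).1 hxz)).symm
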